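/- Let N₁ ⊆ M_{m₁} and N₂ ⊆ M_{m₂} be unital *-subalgebras, and consider N₁ ⊗ N₂ ⊆ M_{m₁} ⊗ M_{m₂} ≅ M_{m₁ m₂}. Then D(M_{m₁} ⊗ M_{m₂} ‖ N₁ ⊗ N₂) ≥ D(M_{m₁}‖N₁) + D(M_{m₂}‖N₂). -/

import Mathlib

open scoped ENNReal Classical ComplexOrder
open Matrix

noncomputable section

namespace GJL

variable {n : Type*} [Fintype n] [DecidableEq n]

/-- `Mat n` is the matrix *-algebra with rows and columns indexed by `n`. -/
abbrev Mat (n : Type*) [Fintype n] [DecidableEq n] := Matrix n n ℂ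

/-- A density matrix: positive semidefinite with trace one. -/
def IsDensity (ρ : Mat n) : Prop := ρ.PosSemidef ∧ ρ.trace = 1

/-- The real part of the (matrix) trace. -/
def traceR (A : Mat n) : ℝ := (A.trace).re

/-- Real matrix powers via the continuous functional calculus.  For positive
semidefinite matrices and negative exponents this is the generalized inverse
power on the support, since `(0 : ℝ) ^ r = 0` for `r ≠ 0`. -/
def mpow (A : Mat n) (r : ℝ) : Mat n := cfc (fun x : ℝ => x ^ r) A

/-- Matrix logarithm on the support (`Real.log 0 = 0`). -/
def mlog (A : Mat n) : Mat n := cfc Real.log A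

/-- Schatten `p`-norm `(Tr ((x* x)^(p/2)))^(1/p)`. -/
def snorm (p : ℝ) (x : Mat n) : ℝ := (traceR (mpow (xᴴ * x) (p/2))) ^ (1/p)

/-- Operator norm `‖x‖_∞`. -/
def opNorm (x : Mat n) : ℝ := ‖(Matrix.toEuclideanCLM (𝕜 := ℂ) x : EuclideanSpace ℂ n →L[ℂ] EuclideanSpace ℂ n)‖

/-- The support projection of `ρ` is dominated by that of `σ` (for positive
semidefinite matrices: `ker σ ⊆ ker ρ`). -/
def suppLe (ρ σ : Mat n) : Prop := ∀ v, σ.mulVec v = 0 → ρ.mulVec v = 0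

/-- `e` is the support projection of `ρ`. -/
def IsSupportProj (ρ e : Mat n) : Prop :=
  e.IsHermitian ∧ e * e = e ∧ ∀ v, e.mulVec v = 0 ↔ ρ.mulVec v = 0

/-- `D_∞(ρ‖σ) = log min {λ ≥ 0 | ρ ≤ λ σ}`, `⊤` if no such `λ` exists. -/
def Dinf (ρ σ : Mat n) : EReal :=
  if ∃ c : ℝ, 0 ≤ c ∧ (c • σ - ρ).PosSemidef then
    ((Real.log (sInf {c : ℝ | 0 ≤ c ∧ (c • σ - ρ).PosSemidef}) : ℝ) : EReal)
  else ⊤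

/-- Umegaki relative entropy `D(ρ‖σ) = Tr(ρ log ρ - ρ log σ)`, `⊤` if the
support condition fails. -/
def DU (ρ σ : Mat n) : EReal :=
  if suppLe ρ σ then ((traceR (ρ * mlog ρ - ρ * mlog σ) : ℝ) : EReal) else ⊤

/-- The sandwiched matrix `σ^{(1-p)/(2p)} ρ σ^{(1-p)/(2p)}`; note that for
`p > 1` the exponent `(1-p)/(2p)` equals `-1/(2p')` with `1/p + 1/p' = 1`. -/
def sandwich (p : ℝ) (ρ σ : Mat n) : Mat n :=
  mpow σ ((1 - p)/(2*p)) * ρ * mpow σ ((1 - p)/(2*p))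

/-- The sandwiched Rényi relative entropy `D_p(ρ‖σ)` for `p ∈ [1/2, ∞]`:
for `p ∈ (1,∞)` it is `p' log ‖σ^{-1/(2p')} ρ σ^{-1/(2p')}‖_p
= (p-1)⁻¹ log Tr ((σ^{-1/(2p')} ρ σ^{-1/(2p')})^p)` when the support of `ρ` is
dominated by that of `σ` and `⊤` otherwise; for `p ∈ [1/2, 1)` it is
`(p-1)⁻¹ log Tr ((σ^{(1-p)/(2p)} ρ σ^{(1-p)/(2p)})^p)` (`⊤` when the trace
vanishes, i.e. when the honest value is `+∞`); `D_1` is the Umegaki relative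
entropy and `D_∞` the max-relative entropy. -/
def Dp (p : ℝ≥0∞) (ρ σ : Mat n) : EReal :=
  if p = ⊤ then Dinf ρ σ
  else if p = 1 then DU ρ σ
  else if 1 < p.toReal ∧ ¬ suppLe ρ σ then ⊤
  else if traceR (mpow (sandwich p.toReal ρ σ) p.toReal) = 0 then ⊤
  else (((p.toReal - 1)⁻¹ * Real.log (traceR (mpow (sandwich p.toReal ρ σ) p.toReal)) : ℝ) : EReal)

/-- `D_p(ρ‖S) = inf { D_p(ρ‖σ) | σ a density in S }`. -/
def DpSet (p : ℝ≥0∞) (ρ : Mat n) (S : Set (Mat n)) : EReal :=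
  ⨅ σ ∈ {σ ∈ S | IsDensity σ}, Dp p ρ σ

/-- `D_p(A‖S) = sup { D_p(ρ‖S) | ρ a density in A }`. -/
def DpRel (p : ℝ≥0∞) (A S : Set (Mat n)) : EReal :=
  ⨆ ρ ∈ {ρ ∈ A | IsDensity ρ}, DpSet p ρ S

open scoped Kronecker in
/-- The algebraic tensor product `N₁ ⊗ N₂ ⊆ M_{n₁} ⊗ M_{n₂} = M_{n₁ × n₂}`,
realized as the linear span of Kronecker products. -/
def tensorSpan {n₁ n₂ : Type*} [Fintype n₁] [DecidableEq n₁] [Fintype n₂] [DecidableEq n₂]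
    (N₁ : Set (Mat n₁)) (N₂ : Set (Mat n₂)) : Set (Mat (n₁ × n₂)) :=
  ↑(Submodule.span ℂ {z : Mat (n₁ × n₂) | ∃ x ∈ N₁, ∃ y ∈ N₂, z = x ⊗ₖ y})

/-- `D_{p,cb}(M‖N) = sup_k D_p(M_k ⊗ M ‖ M_k ⊗ N)`. -/
def DpCb (p : ℝ≥0∞) (N : Set (Mat n)) : EReal :=
  ⨆ k : ℕ, DpRel p Set.univ (tensorSpan (Set.univ : Set (Mat (Fin k))) N)

/-- `E` is the trace preserving conditional expectation onto `N`, i.e. the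
orthogonal projection onto `N` with respect to the Hilbert–Schmidt inner
product `⟨x,y⟩ = Tr(x* y)`. -/
def IsCondExp (N : Set (Mat n)) (E : Mat n →ₗ[ℂ] Mat n) : Prop :=
  (∀ x, E x ∈ N) ∧ (∀ x ∈ N, E x = x) ∧
    ∀ x y, y ∈ N → ((E x)ᴴ * y).trace = (xᴴ * y).trace

/-- The Pimsner–Popa index constant
`λ(M:N) = max {c ≥ 0 | c x ≤ E(x) for all x ≥ 0}`. -/
def ppIndex (E : Mat n →ₗ[ℂ] Mat n) : ℝ :=
  sSup {c : ℝ | 0 ≤ c ∧ ∀ x : Mat n, x.PosSemidef → (E x - c • x).PosSemidef}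

/-- von Neumann entropy `H(ρ) = -Tr(ρ log ρ)`. -/
def vnEntropy (ρ : Mat n) : ℝ := - traceR (ρ * mlog ρ)

/-- The amplification `id_{M_k} ⊗ Φ` acting on `M_k ⊗ M_n = M_{k × n}`,
applying `Φ` blockwise. -/
def ampFun (k : Type*) [Fintype k] [DecidableEq k] (Φ : Mat n →ₗ[ℂ] Mat n)
    (X : Mat (k × n)) : Mat (k × n) :=
  Matrix.of fun a b => Φ (Matrix.of fun s t => X (a.1, s) (b.1, t)) a.2 b.2

/-- Complete positivity: all amplifications `id_{M_k} ⊗ Φ` preserve positive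
semidefiniteness. -/
def IsCP (Φ : Mat n →ₗ[ℂ] Mat n) : Prop :=
  ∀ (k : ℕ) (X : Mat (Fin k × n)), X.PosSemidef → (ampFun (Fin k) Φ X).PosSemidef

/-- Completely positive and trace preserving. -/
def IsCPTP (Φ : Mat n →ₗ[ℂ] Mat n) : Prop :=
  IsCP Φ ∧ ∀ x : Mat n, (Φ x).trace = x.trace

/-!
Let `E` be the trace-preserving conditional expectation onto `N` and `H` the von Neumann entropy.
The functional calculus stays inside `N`, so `Tr (ρ log σ) = Tr (E ρ log σ)` for every density `σ`
in `N`, which gives `D(ρ‖σ) = (H(E ρ) - H(ρ)) + D(E ρ‖σ)`. The last term is nonnegative by Klein's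
inequality and vanishes at `σ = E ρ`, hence `D(ρ‖N) = H(E ρ) - H(ρ)`. The conditional expectation
onto `N₁ ⊗ N₂` sends `ρ₁ ⊗ ρ₂` to `E₁ ρ₁ ⊗ E₂ ρ₂` and entropy is additive on product states, so
`D(ρ₁ ⊗ ρ₂‖N₁ ⊗ N₂) = D(ρ₁‖N₁) + D(ρ₂‖N₂)`: product states already attain the lower bound.
-/

section FunctionalCalculus

variable {A : Type*} [Ring A] [StarRing A] [TopologicalSpace A] [Algebra ℝ A]
  [ContinuousFunctionalCalculus ℝ A IsSelfAdjoint]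

lemma cfc_map_pi_real {ι : Type*} [Finite ι] (φ : (ι → ℝ) →⋆ₐ[ℝ] A) (f : ℝ → ℝ) (d : ι → ℝ) :
    cfc f (φ d) = φ (f ∘ d) := by
  have := Fintype.ofFinite ι
  let q := Lagrange.interpolate (Finset.univ.image d) id f
  have eval_q (i : ι) : q.eval (d i) = f (d i) :=
    Lagrange.eval_interpolate_at_node (v := id) f Function.injective_id.injOn (by simp)
  have spectrum_subset : spectrum ℝ (φ d) ⊆ Set.range d := fun x hx => by
    have hx : x ∈ ⋃ i, spectrum ℝ (algebraMap ℝ ℝ (d i)) :=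
      Pi.spectrum_eq (R := ℝ) d ▸ AlgHom.spectrum_apply_subset φ d hx
    simpa only [spectrum.scalar_eq, Set.iUnion_singleton_eq_range] using hx
  have eqOn : (spectrum ℝ (φ d)).EqOn f q.eval := fun x hx => by
    obtain ⟨i, rfl⟩ := spectrum_subset hx
    exact (eval_q i).symm
  have hφd : IsSelfAdjoint (φ d) := (IsSelfAdjoint.all d).map φ
  rw [cfc_congr eqOn, cfc_polynomial q (φ d) hφd, Polynomial.aeval_algHom_apply]
  congr 1
  ext i
  simp [eval_q]

end FunctionalCalculus

lemma continuousOn_spectrum (A : Mat n) (f : ℝ → ℝ) : ContinuousOn f (spectrum ℝ A) :=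
  A.finite_real_spectrum.continuousOn f

lemma cfc_mem_starSubalgebra (N : StarSubalgebra ℂ (Mat n)) {A : Mat n} (hA : A ∈ N) (f : ℝ → ℝ) :
    cfc f A ∈ N :=
  have : IsClosed (N : Set (Mat n)) := N.toSubalgebra.toSubmodule.closed_of_finiteDimensional
  cfc_mem f hA

/-- The real functions on `n`, realized as the matrices that are diagonal in the orthonormal basis
given by the columns of `U`. -/
def diagonalHom (U : unitary (Mat n)) : (n → ℝ) →⋆ₐ[ℝ] Mat n where
  toFun d := Unitary.conjStarAlgAut ℂ _ U (diagonal fun i => (d i : ℂ))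
  map_one' := by simp
  map_zero' := by simp
  map_mul' d e := by simp only [← map_mul, diagonal_mul_diagonal, Pi.mul_apply, Complex.ofReal_mul]
  map_add' d e := by simp only [← map_add, diagonal_add, Pi.add_apply, Complex.ofReal_add]
  commutes' r := by
    have diagonal_eq : diagonal (fun i => ((algebraMap ℝ (n → ℝ) r i : ℝ) : ℂ)) = (r : ℂ) • 1 :=
      (smul_one_eq_diagonal (r : ℂ)).symm
    rw [diagonal_eq, map_smul, map_one, Complex.coe_smul, Algebra.algebraMap_eq_smul_one]
  map_star' d := by
    simp only [← map_star, star_eq_conjTranspose, diagonal_conjTranspose]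
    congr!
    simp

lemma diagonalHom_apply (U : unitary (Mat n)) (d : n → ℝ) :
    diagonalHom U d = U * diagonal (fun i => (d i : ℂ)) * (U : Mat n)ᴴ := rfl

lemma diagonalHom_eigenvalues {A : Mat n} (hA : A.IsHermitian) :
    diagonalHom hA.eigenvectorUnitary hA.eigenvalues = A :=
  hA.spectral_theorem.symm

lemma cfc_eq_diagonalHom {A : Mat n} (hA : A.IsHermitian) (f : ℝ → ℝ) :
    cfc f A = diagonalHom hA.eigenvectorUnitary (f ∘ hA.eigenvalues) := by
  conv_lhs => rw [← diagonalHom_eigenvalues hA]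
  exact cfc_map_pi_real _ f _

lemma traceR_sub (A B : Mat n) : traceR (A - B) = traceR A - traceR B := by
  simp only [traceR, trace_sub, Complex.sub_re]

/-- The transition probabilities `|⟨uᵢ, vⱼ⟩|²` between the orthonormal bases formed by the columns
of `U` and of `V`. -/
def overlap (U V : unitary (Mat n)) (i j : n) : ℝ := Complex.normSq (((U : Mat n)ᴴ * V) i j)

lemma overlap_nonneg (U V : unitary (Mat n)) (i j : n) : 0 ≤ overlap U V i j :=
  Complex.normSq_nonneg _

lemma traceR_diagonalHom_mul (U V : unitary (Mat n)) (d e : n → ℝ) :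
    traceR (diagonalHom U d * diagonalHom V e) = ∑ i, ∑ j, overlap U V i j * (d i * e j) := by
  set W : Mat n := (U : Mat n)ᴴ * V
  have trace_eq : (diagonalHom U d * diagonalHom V e).trace =
      (diagonal (fun i => (d i : ℂ)) * W * diagonal (fun j => (e j : ℂ)) * Wᴴ).trace := by
    rw [diagonalHom_apply, diagonalHom_apply, conjTranspose_mul, conjTranspose_conjTranspose,
      Matrix.mul_assoc, Matrix.mul_assoc, trace_mul_comm]
    simp only [W, Matrix.mul_assoc]
  have entry_eq (i j : n) : (d i : ℂ) * W i j * e j * star (W i j) =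
      ((overlap U V i j * (d i * e j) : ℝ) : ℂ) := by
    push_cast [overlap, ← Complex.mul_conj, starRingEnd_apply]
    ring
  rw [traceR, trace_eq, trace, Complex.re_sum]
  refine Finset.sum_congr rfl fun i _ => ?_
  rw [diag_apply, Matrix.mul_apply, Complex.re_sum]
  refine Finset.sum_congr rfl fun j _ => ?_
  rw [mul_diagonal, diagonal_mul, conjTranspose_apply, entry_eq, Complex.ofReal_re]

lemma traceR_diagonalHom_left (U V : unitary (Mat n)) (d : n → ℝ) :
    traceR (diagonalHom U d) = ∑ i, ∑ j, overlap U V i j * d i := by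
  simpa using traceR_diagonalHom_mul U V d 1

lemma traceR_diagonalHom_right (U V : unitary (Mat n)) (e : n → ℝ) :
    traceR (diagonalHom V e) = ∑ i, ∑ j, overlap U V i j * e j := by
  simpa using traceR_diagonalHom_mul U V 1 e

section PosSemidef

open scoped MatrixOrder

lemma trace_mul_nonneg_of_posSemidef {A B : Mat n} (hA : A.PosSemidef) (hB : B.PosSemidef) :
    0 ≤ (A * B).trace := by
  obtain ⟨X, rfl⟩ := CStarAlgebra.nonneg_iff_eq_star_mul_self.mp hA.nonneg
  rw [Matrix.mul_assoc, trace_mul_comm]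
  exact (hB.mul_mul_conjTranspose_same X).trace_nonneg

lemma trace_mul_eq_zero_iff_of_posSemidef {A B : Mat n} (hA : A.PosSemidef) (hB : B.PosSemidef) :
    (A * B).trace = 0 ↔ A * B = 0 := by
  refine ⟨fun h => ?_, fun h => by rw [h, trace_zero]⟩
  obtain ⟨X, rfl⟩ := CStarAlgebra.nonneg_iff_eq_star_mul_self.mp hA.nonneg
  obtain ⟨Y, rfl⟩ := CStarAlgebra.nonneg_iff_eq_star_mul_self.mp hB.nonneg
  simp only [star_eq_conjTranspose] at h ⊢
  have hXY : X * Yᴴ = 0 := by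
    rw [← trace_mul_conjTranspose_self_eq_zero_iff, ← h, conjTranspose_mul,
      conjTranspose_conjTranspose, ← Matrix.mul_assoc, trace_mul_comm]
    simp only [Matrix.mul_assoc]
  calc Xᴴ * X * (Yᴴ * Y) = Xᴴ * (X * Yᴴ) * Y := by simp only [Matrix.mul_assoc]
    _ = 0 := by rw [hXY, Matrix.mul_zero, Matrix.zero_mul]

lemma posSemidef_cfc {f : ℝ → ℝ} (hf : ∀ x, 0 ≤ f x) (A : Mat n) : (cfc f A).PosSemidef :=
  nonneg_iff_posSemidef.mp (cfc_nonneg fun x _ => hf x)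

end PosSemidef

/-- The orthogonal projection onto the kernel of a Hermitian matrix. -/
def kerProj (A : Mat n) : Mat n := cfc (Set.indicator {0} 1 : ℝ → ℝ) A

lemma posSemidef_kerProj (A : Mat n) : (kerProj A).PosSemidef :=
  posSemidef_cfc (Set.indicator_nonneg fun _ _ => zero_le_one) A

lemma mul_kerProj {A : Mat n} (hA : A.IsHermitian) : A * kerProj A = 0 := by
  have hA : IsSelfAdjoint A := hA
  nth_rw 1 [kerProj, ← cfc_id' ℝ A]
  rw [← cfc_mul _ _ A (continuousOn_spectrum A _) (continuousOn_spectrum A _), ← cfc_zero ℝ A]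
  congr 1
  ext x
  by_cases hx : x = 0 <;> simp [hx]

lemma one_sub_kerProj {A : Mat n} (hA : A.IsHermitian) :
    1 - kerProj A = cfc (fun x : ℝ => x⁻¹) A * A := by
  have hA : IsSelfAdjoint A := hA
  nth_rw 3 [← cfc_id' ℝ A]
  rw [← cfc_mul _ _ A (continuousOn_spectrum A _) (continuousOn_spectrum A _), kerProj,
    ← cfc_one ℝ A, ← cfc_sub _ _ A (continuousOn_spectrum A _) (continuousOn_spectrum A _)]
  congr 1
  ext x
  by_cases hx : x = 0 <;> simp [hx]

lemma kerProj_mulVec_eq_self {A : Mat n} (hA : A.IsHermitian) {v : n → ℂ} (hv : A *ᵥ v = 0) :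
    kerProj A *ᵥ v = v := by
  have : (1 - kerProj A) *ᵥ v = 0 := by
    rw [one_sub_kerProj hA, ← mulVec_mulVec, hv, mulVec_zero]
  rw [sub_mulVec, one_mulVec, sub_eq_zero] at this
  exact this.symm

lemma suppLe_iff_mul_kerProj_eq_zero {ρ σ : Mat n} (hσ : σ.IsHermitian) :
    suppLe ρ σ ↔ ρ * kerProj σ = 0 := by
  refine ⟨fun h => ext_of_mulVec_single fun j => ?_, fun h v hv => ?_⟩
  · rw [← mulVec_mulVec, zero_mulVec]
    exact h _ (by rw [mulVec_mulVec, mul_kerProj hσ, zero_mulVec])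
  · rw [← kerProj_mulVec_eq_self hσ hv, mulVec_mulVec, h, zero_mulVec]

lemma suppLe_iff_trace_mul_kerProj_eq_zero {ρ σ : Mat n} (hρ : ρ.PosSemidef)
    (hσ : σ.IsHermitian) : suppLe ρ σ ↔ (ρ * kerProj σ).trace = 0 := by
  rw [suppLe_iff_mul_kerProj_eq_zero hσ,
    trace_mul_eq_zero_iff_of_posSemidef hρ (posSemidef_kerProj σ)]

lemma sub_le_mul_log_sub_log {a b : ℝ} (ha : 0 ≤ a) (hb : 0 ≤ b) (hab : b = 0 → a = 0) :
    a - b ≤ a * (Real.log a - Real.log b) := by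
  rcases hb.eq_or_lt with rfl | hb
  · simp [hab rfl]
  rcases ha.eq_or_lt with rfl | ha
  · simpa using hb.le
  have log_le : Real.log b - Real.log a ≤ b / a - 1 := by
    rw [← Real.log_div hb.ne' ha.ne']
    exact Real.log_le_sub_one_of_pos (div_pos hb ha)
  have := mul_le_mul_of_nonneg_left log_le ha.le
  rw [mul_sub_one, mul_div_cancel₀ _ ha.ne'] at this
  linarith

lemma overlap_mul_eigenvalues_eq_zero {ρ σ : Mat n} (hρ : ρ.PosSemidef) (hσ : σ.IsHermitian)
    (h : suppLe ρ σ) {i j : n} (hj : hσ.eigenvalues j = 0) :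
    overlap hρ.1.eigenvectorUnitary hσ.eigenvectorUnitary i j * hρ.1.eigenvalues i = 0 := by
  set U := hρ.1.eigenvectorUnitary
  set V := hσ.eigenvectorUnitary
  let weight (i j : n) : ℝ :=
    overlap U V i j * (hρ.1.eigenvalues i * Set.indicator {0} 1 (hσ.eigenvalues j))
  have weight_nonneg (i j : n) : 0 ≤ weight i j :=
    mul_nonneg (overlap_nonneg U V i j) (mul_nonneg (hρ.eigenvalues_nonneg i)
      (Set.indicator_nonneg (fun _ _ => zero_le_one) _))
  have sum_weight : ∑ i, ∑ j, weight i j = 0 := by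
    have : traceR (ρ * kerProj σ) = 0 := by
      rw [traceR, (suppLe_iff_trace_mul_kerProj_eq_zero hρ hσ).mp h, Complex.zero_re]
    rwa [kerProj, cfc_eq_diagonalHom hσ, ← diagonalHom_eigenvalues hρ.1,
      traceR_diagonalHom_mul] at this
  have weight_eq_zero : weight i j = 0 :=
    congrFun ((Fintype.sum_eq_zero_iff_of_nonneg (weight_nonneg i)).mp
      (congrFun ((Fintype.sum_eq_zero_iff_of_nonneg
        fun i => Finset.sum_nonneg fun j _ => weight_nonneg i j).mp sum_weight) i)) j
  simpa [weight, hj] using weight_eq_zero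

lemma traceR_mul_mlog_self {ρ : Mat n} (hρ : ρ.IsHermitian) :
    traceR (ρ * mlog ρ) = traceR (diagonalHom hρ.eigenvectorUnitary
      fun i => hρ.eigenvalues i * Real.log (hρ.eigenvalues i)) := by
  rw [mlog, cfc_eq_diagonalHom hρ]
  nth_rw 1 [← diagonalHom_eigenvalues hρ]
  rw [← map_mul]
  rfl

lemma vnEntropy_eq_traceR_cfc {A : Mat n} (hA : A.IsHermitian) :
    vnEntropy A = traceR (cfc Real.negMulLog A) := by
  have neg_eq : cfc Real.negMulLog A = -(diagonalHom hA.eigenvectorUnitary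
      fun i => hA.eigenvalues i * Real.log (hA.eigenvalues i)) := by
    rw [cfc_eq_diagonalHom hA, ← map_neg]
    congr 1
    ext i
    simp only [Function.comp_apply, Real.negMulLog, Pi.neg_apply, neg_mul]
  rw [vnEntropy, traceR_mul_mlog_self hA, neg_eq, traceR, traceR, trace_neg, Complex.neg_re]

lemma klein_inequality {ρ σ : Mat n} (hρ : ρ.PosSemidef) (hσ : σ.PosSemidef)
    (h : suppLe ρ σ) :
    traceR ρ - traceR σ ≤ traceR (ρ * mlog ρ - ρ * mlog σ) := by
  set U := hρ.1.eigenvectorUnitary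
  set V := hσ.1.eigenvectorUnitary
  set a := hρ.1.eigenvalues
  set b := hσ.1.eigenvalues
  have traceR_left : traceR ρ = ∑ i, ∑ j, overlap U V i j * a i := by
    rw [← traceR_diagonalHom_left, diagonalHom_eigenvalues]
  have traceR_right : traceR σ = ∑ i, ∑ j, overlap U V i j * b j := by
    rw [← traceR_diagonalHom_right, diagonalHom_eigenvalues]
  have traceR_self : traceR (ρ * mlog ρ) = ∑ i, ∑ j, overlap U V i j * (a i * Real.log (a i)) := by
    rw [traceR_mul_mlog_self hρ.1, traceR_diagonalHom_left _ V]
  have traceR_cross : traceR (ρ * mlog σ) = ∑ i, ∑ j, overlap U V i j * (a i * Real.log (b j)) := by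
    rw [mlog, cfc_eq_diagonalHom hσ.1, ← diagonalHom_eigenvalues hρ.1, traceR_diagonalHom_mul]
    rfl
  rw [traceR_sub, traceR_left, traceR_right, traceR_self, traceR_cross]
  simp only [← Finset.sum_sub_distrib, ← mul_sub]
  refine Finset.sum_le_sum fun i _ => Finset.sum_le_sum fun j _ => ?_
  rcases (overlap_nonneg U V i j).eq_or_lt with h0 | hpos
  · simp only [← h0, zero_mul, le_refl]
  · refine mul_le_mul_of_nonneg_left (sub_le_mul_log_sub_log (hρ.eigenvalues_nonneg i)
      (hσ.eigenvalues_nonneg j) fun hj => ?_) hpos.le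
    exact (mul_eq_zero.mp (overlap_mul_eigenvalues_eq_zero hρ hσ.1 h hj)).resolve_left hpos.ne'

lemma DU_nonneg {ρ σ : Mat n} (hρ : IsDensity ρ) (hσ : IsDensity σ) : 0 ≤ DU ρ σ := by
  rw [DU]
  split_ifs with h
  · have klein := klein_inequality hρ.1 hσ.1 h
    rw [traceR, hρ.2, traceR, hσ.2, sub_self] at klein
    exact_mod_cast klein
  · exact le_top

lemma DU_self (ρ : Mat n) : DU ρ ρ = 0 := by
  rw [DU, if_pos (show suppLe ρ ρ from fun _ h => h), sub_self, traceR, trace_zero,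
    Complex.zero_re, EReal.coe_zero]

lemma Dp_one (ρ σ : Mat n) : Dp 1 ρ σ = DU ρ σ := by
  rw [Dp, if_neg ENNReal.one_ne_top, if_pos rfl]

lemma DpRel_mono_left {p : ℝ≥0∞} {A B : Set (Mat n)} (h : A ⊆ B) (S : Set (Mat n)) :
    DpRel p A S ≤ DpRel p B S :=
  biSup_mono fun _ hρ => ⟨h hρ.1, hρ.2⟩

lemma DpSet_le_DpRel {A : Set (Mat n)} {ρ : Mat n} (hA : ρ ∈ A) (hρ : IsDensity ρ) (p : ℝ≥0∞)
    (S : Set (Mat n)) : DpSet p ρ S ≤ DpRel p A S :=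
  le_biSup (DpSet p · S) (show ρ ∈ {ρ ∈ A | IsDensity ρ} from ⟨hA, hρ⟩)

section CondExp

lemma exists_isCondExp (N : Submodule ℂ (Mat n)) : ∃ E, IsCondExp (N : Set (Mat n)) E := by
  let := toMatrixNormedAddCommGroup (1 : Mat n) .one
  let := toMatrixInnerProductSpace (1 : Mat n) PosDef.one.posSemidef
  have inner_eq (x y : Mat n) : inner ℂ x y = (xᴴ * y).trace := by
    change (y * 1 * xᴴ).trace = _
    rw [Matrix.mul_one, trace_mul_comm]
  refine ⟨N.starProjection, N.starProjection_apply_mem,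
    fun x hx => Submodule.starProjection_eq_self_iff.mpr hx, fun x y hy => ?_⟩
  rw [← inner_eq, ← inner_eq]
  change inner ℂ (N.starProjection x) y = _
  rw [Submodule.inner_starProjection_left_eq_right, Submodule.starProjection_eq_self_iff.mpr hy]

variable {N : StarSubalgebra ℂ (Mat n)} {E : Mat n →ₗ[ℂ] Mat n}

lemma IsCondExp.trace_mul (hE : IsCondExp (N : Set (Mat n)) E) (x : Mat n) {y : Mat n}
    (hy : y ∈ N) : (E x * y).trace = (x * y).trace := by
  have := congrArg star (hE.2.2 x yᴴ (star_mem hy))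
  rwa [← trace_conjTranspose, ← trace_conjTranspose, conjTranspose_mul, conjTranspose_mul,
    conjTranspose_conjTranspose, conjTranspose_conjTranspose, conjTranspose_conjTranspose,
    trace_mul_comm, trace_mul_comm y] at this

lemma IsCondExp.eq_of_trace_mul (hE : IsCondExp (N : Set (Mat n)) E) {x z : Mat n} (hz : z ∈ N)
    (h : ∀ y ∈ N, (z * y).trace = (x * y).trace) : E x = z := by
  have conjTranspose_mem : (E x - z)ᴴ ∈ N := star_mem (sub_mem (hE.1 x) hz)
  rw [← sub_eq_zero, ← trace_mul_conjTranspose_self_eq_zero_iff, Matrix.sub_mul, trace_sub,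
    hE.trace_mul x conjTranspose_mem, h _ conjTranspose_mem, sub_self]

lemma IsCondExp.map_conjTranspose (hE : IsCondExp (N : Set (Mat n)) E) (x : Mat n) :
    E xᴴ = (E x)ᴴ :=
  hE.eq_of_trace_mul (star_mem (hE.1 x)) fun y hy => hE.2.2 x y hy

lemma IsCondExp.map_isHermitian (hE : IsCondExp (N : Set (Mat n)) E) {x : Mat n}
    (hx : x.IsHermitian) : (E x).IsHermitian := by
  rw [IsHermitian, ← hE.map_conjTranspose, hx.eq]

open scoped MatrixOrder in
lemma IsCondExp.map_posSemidef (hE : IsCondExp (N : Set (Mat n)) E) {x : Mat n}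
    (hx : x.PosSemidef) : (E x).PosSemidef := by
  have selfAdjoint : IsSelfAdjoint (E x) := hE.map_isHermitian hx.1
  have negPart_posSemidef : (E x)⁻.PosSemidef :=
    nonneg_iff_posSemidef.mp (CFC.negPart_nonneg (E x))
  have negPart_mem : (E x)⁻ ∈ N := by
    rw [CFC.negPart_def, cfcₙ_eq_cfc]
    exact cfc_mem_starSubalgebra N (hE.1 x) _
  have mul_negPart : E x * (E x)⁻ = -((E x)⁻ * (E x)⁻) := by
    nth_rw 1 [← CFC.posPart_sub_negPart (E x)]
    rw [Matrix.sub_mul, CFC.posPart_mul_negPart, zero_sub]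
  have trace_nonpos : ((E x)⁻ * (E x)⁻).trace ≤ 0 := by
    rw [← neg_nonneg, ← trace_neg, ← mul_negPart, hE.trace_mul x negPart_mem]
    exact trace_mul_nonneg_of_posSemidef hx negPart_posSemidef
  have negPart_eq_zero : (E x)⁻ = 0 := by
    rw [← trace_mul_conjTranspose_self_eq_zero_iff, negPart_posSemidef.1.eq]
    exact trace_nonpos.antisymm
      (trace_mul_nonneg_of_posSemidef negPart_posSemidef negPart_posSemidef)
  rw [← nonneg_iff_posSemidef, ← CFC.posPart_sub_negPart (E x), negPart_eq_zero, sub_zero]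
  exact CFC.posPart_nonneg (E x)

lemma IsCondExp.map_isDensity (hE : IsCondExp (N : Set (Mat n)) E) {ρ : Mat n}
    (hρ : IsDensity ρ) : IsDensity (E ρ) := by
  refine ⟨hE.map_posSemidef hρ.1, ?_⟩
  simpa only [Matrix.mul_one, hρ.2] using hE.trace_mul ρ (one_mem N)

lemma IsCondExp.traceR_mul_cfc (hE : IsCondExp (N : Set (Mat n)) E) (ρ : Mat n) {σ : Mat n}
    (hσ : σ ∈ N) (f : ℝ → ℝ) : traceR (E ρ * cfc f σ) = traceR (ρ * cfc f σ) := by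
  rw [traceR, hE.trace_mul ρ (cfc_mem_starSubalgebra N hσ f), traceR]

lemma IsCondExp.suppLe_map_iff (hE : IsCondExp (N : Set (Mat n)) E) {ρ σ : Mat n}
    (hρ : ρ.PosSemidef) (hσ : σ.IsHermitian) (hσN : σ ∈ N) : suppLe (E ρ) σ ↔ suppLe ρ σ := by
  rw [suppLe_iff_trace_mul_kerProj_eq_zero (hE.map_posSemidef hρ) hσ,
    suppLe_iff_trace_mul_kerProj_eq_zero hρ hσ, kerProj,
    hE.trace_mul ρ (cfc_mem_starSubalgebra N hσN _)]

lemma IsCondExp.DU_eq_vnEntropy_sub_add (hE : IsCondExp (N : Set (Mat n)) E) {ρ σ : Mat n}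
    (hρ : ρ.PosSemidef) (hσ : σ.IsHermitian) (hσN : σ ∈ N) :
    DU ρ σ = ((vnEntropy (E ρ) - vnEntropy ρ : ℝ) : EReal) + DU (E ρ) σ := by
  simp only [DU, hE.suppLe_map_iff hρ hσ hσN]
  split_ifs
  · have cross : traceR (E ρ * mlog σ) = traceR (ρ * mlog σ) := hE.traceR_mul_cfc ρ hσN _
    rw [← EReal.coe_add, traceR_sub, traceR_sub, vnEntropy, vnEntropy, cross]
    congr 1
    ring
  · exact (EReal.coe_add_top _).symm

theorem IsCondExp.DpSet_one_eq (hE : IsCondExp (N : Set (Mat n)) E) {ρ : Mat n}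
    (hρ : IsDensity ρ) :
    DpSet 1 ρ (N : Set (Mat n)) = ((vnEntropy (E ρ) - vnEntropy ρ : ℝ) : EReal) := by
  simp only [DpSet, Dp_one]
  apply le_antisymm
  · have hEρ : IsDensity (E ρ) := hE.map_isDensity hρ
    calc ⨅ σ ∈ {σ ∈ (N : Set (Mat n)) | IsDensity σ}, DU ρ σ ≤ DU ρ (E ρ) :=
        iInf₂_le (E ρ) ⟨hE.1 ρ, hEρ⟩
      _ = _ := by rw [hE.DU_eq_vnEntropy_sub_add hρ.1 hEρ.1.1 (hE.1 ρ), DU_self, add_zero]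
  · refine le_iInf₂ fun σ ⟨hσN, hσ⟩ => ?_
    rw [hE.DU_eq_vnEntropy_sub_add hρ.1 hσ.1.1 hσN]
    exact le_add_of_nonneg_right (DU_nonneg (hE.map_isDensity hρ) hσ)

end CondExp

section Kronecker

open scoped Kronecker

variable {n₁ n₂ : Type*} [Fintype n₁] [DecidableEq n₁] [Fintype n₂] [DecidableEq n₂]

lemma diagonalHom_kronecker (U : unitary (Mat n₁)) (V : unitary (Mat n₂)) (d : n₁ → ℝ)
    (e : n₂ → ℝ) :
    diagonalHom U d ⊗ₖ diagonalHom V e =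
      diagonalHom ⟨(U : Mat n₁) ⊗ₖ (V : Mat n₂), kronecker_mem_unitary U.2 V.2⟩
        (fun p => d p.1 * e p.2) := by
  simp only [diagonalHom_apply, mul_kronecker_mul, diagonal_kronecker_diagonal,
    conjTranspose_kronecker, Complex.ofReal_mul]

lemma cfc_negMulLog_kronecker {A : Mat n₁} {B : Mat n₂} (hA : A.IsHermitian)
    (hB : B.IsHermitian) :
    cfc Real.negMulLog (A ⊗ₖ B) =
      cfc Real.negMulLog A ⊗ₖ B + A ⊗ₖ cfc Real.negMulLog B := by
  obtain ⟨U, a, rfl⟩ : ∃ U a, diagonalHom U a = A := ⟨_, _, diagonalHom_eigenvalues hA⟩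
  obtain ⟨V, b, rfl⟩ : ∃ V b, diagonalHom V b = B := ⟨_, _, diagonalHom_eigenvalues hB⟩
  simp only [diagonalHom_kronecker, cfc_map_pi_real, ← map_add]
  congr 1
  ext p
  simp only [Function.comp_apply, Real.negMulLog_mul, Pi.add_apply]
  ring

lemma IsDensity.kronecker {ρ₁ : Mat n₁} {ρ₂ : Mat n₂} (h₁ : IsDensity ρ₁) (h₂ : IsDensity ρ₂) :
    IsDensity (ρ₁ ⊗ₖ ρ₂) :=
  ⟨h₁.1.kronecker h₂.1, by rw [trace_kronecker, h₁.2, h₂.2, one_mul]⟩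

lemma vnEntropy_kronecker {ρ₁ : Mat n₁} {ρ₂ : Mat n₂} (h₁ : IsDensity ρ₁) (h₂ : IsDensity ρ₂) :
    vnEntropy (ρ₁ ⊗ₖ ρ₂) = vnEntropy ρ₁ + vnEntropy ρ₂ := by
  rw [vnEntropy_eq_traceR_cfc (h₁.kronecker h₂).1.1, vnEntropy_eq_traceR_cfc h₁.1.1,
    vnEntropy_eq_traceR_cfc h₂.1.1, cfc_negMulLog_kronecker h₁.1.1 h₂.1.1]
  simp only [traceR, trace_add, trace_kronecker, h₁.2, h₂.2, mul_one, one_mul, Complex.add_re]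

lemma kronecker_mem_tensorSpan {A₁ : Set (Mat n₁)} {A₂ : Set (Mat n₂)} {x : Mat n₁} {y : Mat n₂}
    (hx : x ∈ A₁) (hy : y ∈ A₂) : x ⊗ₖ y ∈ tensorSpan A₁ A₂ :=
  Submodule.subset_span ⟨x, hx, y, hy, rfl⟩

/-- The unital *-algebra structure on the tensor product `N₁ ⊗ N₂` of two unital *-subalgebras. -/
def tensorStarSubalgebra (N₁ : StarSubalgebra ℂ (Mat n₁)) (N₂ : StarSubalgebra ℂ (Mat n₂)) :
    StarSubalgebra ℂ (Mat (n₁ × n₂)) where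
  toSubalgebra := Submodule.toSubalgebra
    (Submodule.span ℂ {z : Mat (n₁ × n₂) | ∃ x ∈ (N₁ : Set (Mat n₁)),
      ∃ y ∈ (N₂ : Set (Mat n₂)), z = x ⊗ₖ y})
    (Submodule.subset_span ⟨1, one_mem N₁, 1, one_mem N₂, one_kronecker_one.symm⟩)
    (fun z w hz hw => by
      have mul_mem_span := Submodule.mul_mem_mul hz hw
      rw [Submodule.span_mul_span] at mul_mem_span
      refine Submodule.span_mono ?_ mul_mem_span
      rintro _ ⟨_, ⟨x, hx, y, hy, rfl⟩, _, ⟨x', hx', y', hy', rfl⟩, rfl⟩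
      exact ⟨x * x', mul_mem hx hx', y * y', mul_mem hy hy', (mul_kronecker_mul _ _ _ _).symm⟩)
  star_mem' {z} hz := by
    change z ∈ Submodule.span ℂ _ at hz
    change star z ∈ Submodule.span ℂ _
    induction hz using Submodule.span_induction with
    | mem z hz =>
      obtain ⟨x, hx, y, hy, rfl⟩ := hz
      exact Submodule.subset_span
        ⟨star x, star_mem hx, star y, star_mem hy, conjTranspose_kronecker x y⟩
    | zero => rw [star_zero]; exact zero_mem _
    | add z w _ _ hz hw => rw [star_add]; exact add_mem hz hw
    | smul c z _ hz => rw [star_smul]; exact Submodule.smul_mem _ _ hz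

lemma coe_tensorStarSubalgebra (N₁ : StarSubalgebra ℂ (Mat n₁))
    (N₂ : StarSubalgebra ℂ (Mat n₂)) :
    (tensorStarSubalgebra N₁ N₂ : Set (Mat (n₁ × n₂))) =
      tensorSpan (N₁ : Set (Mat n₁)) (N₂ : Set (Mat n₂)) := rfl

lemma trace_kronecker_mul_congr {A₁ : Set (Mat n₁)} {A₂ : Set (Mat n₂)} {x x' : Mat n₁}
    {y y' : Mat n₂} (hx : ∀ a ∈ A₁, (x * a).trace = (x' * a).trace)
    (hy : ∀ b ∈ A₂, (y * b).trace = (y' * b).trace) {z : Mat (n₁ × n₂)}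
    (hz : z ∈ tensorSpan A₁ A₂) : ((x ⊗ₖ y) * z).trace = ((x' ⊗ₖ y') * z).trace := by
  change z ∈ Submodule.span ℂ _ at hz
  induction hz using Submodule.span_induction with
  | mem z hz =>
    obtain ⟨a, ha, b, hb, rfl⟩ := hz
    rw [← mul_kronecker_mul, ← mul_kronecker_mul, trace_kronecker, trace_kronecker, hx a ha,
      hy b hb]
  | zero => rw [Matrix.mul_zero, Matrix.mul_zero]
  | add z w _ _ hz hw => simp only [Matrix.mul_add, trace_add, hz, hw]
  | smul c z _ hz => simp only [Matrix.mul_smul, trace_smul, hz]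

variable {N₁ : StarSubalgebra ℂ (Mat n₁)} {N₂ : StarSubalgebra ℂ (Mat n₂)}

lemma IsCondExp.map_kronecker {E₁ : Mat n₁ →ₗ[ℂ] Mat n₁} {E₂ : Mat n₂ →ₗ[ℂ] Mat n₂}
    {E : Mat (n₁ × n₂) →ₗ[ℂ] Mat (n₁ × n₂)}
    (hE : IsCondExp (tensorStarSubalgebra N₁ N₂ : Set (Mat (n₁ × n₂))) E)
    (hE₁ : IsCondExp (N₁ : Set (Mat n₁)) E₁) (hE₂ : IsCondExp (N₂ : Set (Mat n₂)) E₂)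
    (x : Mat n₁) (y : Mat n₂) : E (x ⊗ₖ y) = E₁ x ⊗ₖ E₂ y :=
  hE.eq_of_trace_mul (kronecker_mem_tensorSpan (hE₁.1 x) (hE₂.1 y)) fun _ hz =>
    trace_kronecker_mul_congr (fun _ ha => hE₁.trace_mul x ha) (fun _ hb => hE₂.trace_mul y hb) hz

theorem DpSet_one_kronecker {ρ₁ : Mat n₁} {ρ₂ : Mat n₂} (hρ₁ : IsDensity ρ₁)
    (hρ₂ : IsDensity ρ₂) :
    DpSet 1 (ρ₁ ⊗ₖ ρ₂) (tensorSpan (N₁ : Set (Mat n₁)) (N₂ : Set (Mat n₂))) =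
      DpSet 1 ρ₁ (N₁ : Set (Mat n₁)) + DpSet 1 ρ₂ (N₂ : Set (Mat n₂)) := by
  obtain ⟨E₁, hE₁⟩ : ∃ E, IsCondExp (N₁ : Set (Mat n₁)) E :=
    exists_isCondExp N₁.toSubalgebra.toSubmodule
  obtain ⟨E₂, hE₂⟩ : ∃ E, IsCondExp (N₂ : Set (Mat n₂)) E :=
    exists_isCondExp N₂.toSubalgebra.toSubmodule
  obtain ⟨E, hE⟩ : ∃ E, IsCondExp (tensorStarSubalgebra N₁ N₂ : Set (Mat (n₁ × n₂))) E :=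
    exists_isCondExp (tensorStarSubalgebra N₁ N₂).toSubalgebra.toSubmodule
  rw [← coe_tensorStarSubalgebra, hE.DpSet_one_eq (hρ₁.kronecker hρ₂), hE₁.DpSet_one_eq hρ₁,
    hE₂.DpSet_one_eq hρ₂, hE.map_kronecker hE₁ hE₂, vnEntropy_kronecker hρ₁ hρ₂,
    vnEntropy_kronecker (hE₁.map_isDensity hρ₁) (hE₂.map_isDensity hρ₂), ← EReal.coe_add]
  congr 1
  ring

theorem statement9_general (A₁ : Set (Mat n₁)) (A₂ : Set (Mat n₂))
    (N₁ : StarSubalgebra ℂ (Mat n₁)) (N₂ : StarSubalgebra ℂ (Mat n₂)) :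
    DpRel 1 A₁ (N₁ : Set (Mat n₁)) + DpRel 1 A₂ (N₂ : Set (Mat n₂)) ≤
      DpRel 1 (tensorSpan A₁ A₂) (tensorSpan (N₁ : Set (Mat n₁)) (N₂ : Set (Mat n₂))) := by
  refine EReal.add_le_of_forall_lt fun a ha b hb => ?_
  obtain ⟨ρ₁, ⟨hρ₁A, hρ₁⟩, ha⟩ := lt_biSup_iff.mp ha
  obtain ⟨ρ₂, ⟨hρ₂A, hρ₂⟩, hb⟩ := lt_biSup_iff.mp hb
  calc a + b ≤ DpSet 1 ρ₁ (N₁ : Set (Mat n₁)) + DpSet 1 ρ₂ (N₂ : Set (Mat n₂)) :=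
        add_le_add ha.le hb.le
    _ = DpSet 1 (ρ₁ ⊗ₖ ρ₂) (tensorSpan (N₁ : Set (Mat n₁)) (N₂ : Set (Mat n₂))) :=
        (DpSet_one_kronecker hρ₁ hρ₂).symm
    _ ≤ DpRel 1 (tensorSpan A₁ A₂) (tensorSpan (N₁ : Set (Mat n₁)) (N₂ : Set (Mat n₂))) :=
        DpSet_le_DpRel (kronecker_mem_tensorSpan hρ₁A hρ₂A) (hρ₁.kronecker hρ₂) 1 _

end Kronecker

/-- superadditivity,
`D(M_{m₁} ⊗ M_{m₂} ‖ N₁ ⊗ N₂) ≥ D(M_{m₁}‖N₁) + D(M_{m₂}‖N₂)`. -/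
theorem statement9 {m₁ m₂ : ℕ}
    (N₁ : StarSubalgebra ℂ (Mat (Fin m₁))) (N₂ : StarSubalgebra ℂ (Mat (Fin m₂))) :
    DpRel 1 Set.univ (N₁ : Set (Mat (Fin m₁)))
        + DpRel 1 Set.univ (N₂ : Set (Mat (Fin m₂))) ≤
      DpRel 1 Set.univ
        (tensorSpan (N₁ : Set (Mat (Fin m₁))) (N₂ : Set (Mat (Fin m₂)))) := by
  exact (statement9_general Set.univ Set.univ N₁ N₂).trans (DpRel_mono_left (Set.subset_univ _) _)

end GJL
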